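/- arXiv:math/0612435 — 2 statements merged into one kernel-verified Lean document; each statement's English description precedes it below -/
import Mathlib

section
/- For an m×n matrix X over R (with m,n ≥ 2), the following are equivalent: (1) X belongs to D̃(m,n); (2) every linear combination of the rows of X belongs to D(n); (3) every linear combination of the columns of X belongs to D(m); (4) every column of X belongs to D(m), and the difference of any two columns of X belongs to D(m). -/
/-!
The defining relation of `Dtilde` is the polarization of the condition that row combinations lie in
`Dn`: the product of coordinates `j`, `j'` of `∑ i, lam i • X i` is a double sum `S` over `(i, i')`,
and adding `S` to itself with `i`, `i'` exchanged gives a sum of defining relations, so `S + S = 0`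
and hence `S = 0`. Conversely, the combinations `X i` and `X i + X i'` recover the relation. As
`Dtilde` is invariant under transposition, the same argument handles column combinations. Finally,
the columns and their differences are column combinations, and expanding the product of two
coordinates of a difference of columns leaves, once the products within each column are removed,
the defining relation up to sign.
-/

/-- `D(n)`: vectors all of whose pairwise coordinate products vanish. -/
def Dn {R : Type*} [CommRing R] {n : ℕ} (x : Fin n → R) : Prop :=
  ∀ j j' : Fin n, x j * x j' = 0

/-- `D̃(m,n)`: matrices with `X_{ij}X_{i'j'} + X_{i'j}X_{ij'} = 0` for all indices. -/
def Dtilde {R : Type*} [CommRing R] {m n : ℕ} (X : Matrix (Fin m) (Fin n) R) : Prop :=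
  ∀ (i i' : Fin m) (j j' : Fin n), X i j * X i' j' + X i' j * X i j' = 0

/-- The double sum expanding the product of two coordinates of a row combination is its own
negative, by exchanging the two summation indices. -/
lemma Dtilde.dn_row_comb {R : Type*} [CommRing R] (h2 : ∀ r : R, r + r = 0 → r = 0)
    {m n : ℕ} {X : Matrix (Fin m) (Fin n) R} (h : Dtilde X) (lam : Fin m → R) :
    Dn (fun j => ∑ i, lam i * X i j) := by
  intro j j'
  apply h2
  simp only [Finset.sum_mul_sum]
  nth_rewrite 2 [Finset.sum_comm]
  simp only [← Finset.sum_add_distrib]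
  refine Finset.sum_eq_zero fun i _ => Finset.sum_eq_zero fun i' _ => ?_
  linear_combination lam i * lam i' * h i i' j j'

lemma Dtilde.transpose {R : Type*} [CommRing R] {m n : ℕ} {X : Matrix (Fin m) (Fin n) R}
    (h : Dtilde X) : Dtilde X.transpose := by
  intro j j' i i'
  simp only [Matrix.transpose_apply]
  linear_combination h i i' j j'

theorem stmt_6 {R : Type*} [CommRing R]
    (h2 : ∀ r : R, r + r = 0 → r = 0)
    {m n : ℕ} (hm : 2 ≤ m) (hn : 2 ≤ n)
    (X : Matrix (Fin m) (Fin n) R) :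
    [ Dtilde X,
      ∀ lam : Fin m → R, Dn (fun j => ∑ i, lam i * X i j),
      ∀ mu : Fin n → R, Dn (fun i => ∑ j, mu j * X i j),
      (∀ j : Fin n, Dn (fun i => X i j)) ∧
        (∀ j j' : Fin n, Dn (fun i => X i j - X i j')) ].TFAE := by
  tfae_have 1 → 2 := fun h lam => h.dn_row_comb h2 lam
  tfae_have 2 → 1 := by
    intro h i i' j j'
    have hrow : ∀ k, X k j * X k j' = 0 := fun k => by
      simpa [Pi.single_apply] using h (Pi.single k 1) j j'
    have hsum := h (Pi.single i 1 + Pi.single i' 1) j j'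
    simp only [Pi.add_apply, add_mul, Finset.sum_add_distrib, Pi.single_apply, ite_mul, one_mul,
      zero_mul, Finset.sum_ite_eq', Finset.mem_univ, if_true] at hsum
    linear_combination hsum - hrow i - hrow i'
  tfae_have 1 → 3 := fun h mu => h.transpose.dn_row_comb h2 mu
  tfae_have 3 → 4 := by
    intro h
    refine ⟨fun j => ?_, fun j j' => ?_⟩
    · simpa [Pi.single_apply] using h (Pi.single j 1)
    · simpa [Pi.single_apply, sub_mul, Finset.sum_sub_distrib] using
        h (fun k => (if k = j then 1 else 0) - if k = j' then 1 else 0)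
  tfae_have 4 → 1 := by
    rintro ⟨hcol, hdiff⟩ i i' j j'
    have hd := hdiff j j' i i'
    have hj := hcol j i i'
    have hj' := hcol j' i i'
    simp only at hd hj hj'
    linear_combination hj + hj' - hd
  tfae_finish
end

section
/- Let g : R^m → R^l be a zero-preserving map which may be written g = g_l + h, where g_l : R^m → R^l is R-linear and h is of the form h(u) = g₂(u,u) · k(u) for some symmetric R-bilinear map g₂ : R^m × R^m → R and some map k : R^m → R^l (scalar multiplication of the vector k(u) by the scalar g₂(u,u)). Let X be an m×n matrix in D̃(m,n) with columns c₁,…,c_n ∈ R^m. Then for every a ∈ R^n, g(∑_j a_j · c_j) = ∑_j a_j · g(c_j); that is, g preserves linear combinations of the columns of X. -/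
theorem bilin_col_eq_zero {R : Type*} [CommRing R]
    (h2 : ∀ r : R, r + r = 0 → r = 0)
    {m n : ℕ} (X : Matrix (Fin m) (Fin n) R) (hX : Dtilde X)
    (g2 : (Fin m → R) →ₗ[R] (Fin m → R) →ₗ[R] R)
    (hg2symm : ∀ u v, g2 u v = g2 v u) (j j' : Fin n) :
    g2 (fun i => X i j) (fun i => X i j') = 0 := by
  have expand : ∀ u v : Fin m → R, g2 u v =
      ∑ i, ∑ i', u i * v i' * g2 (Pi.single i 1) (Pi.single i' 1) := by
    intro u v
    have basis_sum : ∀ w : Fin m → R, w = ∑ i, w i • (Pi.single i 1 : Fin m → R) := by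
      intro w
      ext t
      simp [Finset.sum_apply, Pi.single_apply]
    conv_lhs => rw [basis_sum u, basis_sum v]
    simp only [map_sum, map_smul, LinearMap.sum_apply, LinearMap.smul_apply, smul_eq_mul,
      Finset.mul_sum]
    rw [Finset.sum_comm]
    refine Finset.sum_congr rfl fun i _ => Finset.sum_congr rfl fun i' _ => ?_
    ring
  apply h2
  nth_rewrite 2 [hg2symm]
  rw [expand, expand (fun i => X i j'), ← Finset.sum_add_distrib]
  refine Finset.sum_eq_zero fun i _ => ?_
  rw [← Finset.sum_add_distrib]
  refine Finset.sum_eq_zero fun i' _ => ?_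
  linear_combination g2 (Pi.single i 1) (Pi.single i' 1) * hX i i' j j'

theorem stmt_18 {R : Type*} [CommRing R]
    (h2 : ∀ r : R, r + r = 0 → r = 0)
    {m n l : ℕ} (X : Matrix (Fin m) (Fin n) R) (hX : Dtilde X)
    (g : (Fin m → R) → (Fin l → R))
    (hg0 : g 0 = 0)
    (gl : (Fin m → R) →ₗ[R] (Fin l → R))
    (g2 : (Fin m → R) →ₗ[R] (Fin m → R) →ₗ[R] R)
    (hg2symm : ∀ u v, g2 u v = g2 v u)
    (k : (Fin m → R) → (Fin l → R))
    (hg : ∀ u, g u = gl u + g2 u u • k u)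
    (a : Fin n → R) :
    g (∑ j, a j • (fun i => X i j)) = ∑ j, a j • g (fun i => X i j) := by
  have hcol := bilin_col_eq_zero h2 X hX g2 hg2symm
  have hcomb : g2 (∑ j, a j • (fun i => X i j)) (∑ j, a j • (fun i => X i j)) = 0 := by
    simp only [map_sum, map_smul, LinearMap.sum_apply, LinearMap.smul_apply, hcol, smul_zero,
      Finset.sum_const_zero]
  have hgcol : ∀ j, g (fun i => X i j) = gl (fun i => X i j) := by
    intro j
    rw [hg, hcol, zero_smul, add_zero]
  rw [hg, hcomb, zero_smul, add_zero, map_sum]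
  exact Finset.sum_congr rfl fun j _ => by rw [map_smul, hgcol]
end
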